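/- arXiv:1310.3718 — 3 statements merged into one kernel-verified Lean document; each statement's English description precedes it below -/
import Mathlib

section
/- For any strict A∞-algebra (A,m) over a field F, the Hochschild differential satisfies D(I − E) = Σ_{k≥1} m_k = m, where I is the identity map and E is the euler derivation element; in particular the class [m] vanishes in the Hochschild cohomology HH^2(A,A). -/
open scoped BigOperators

/-- A graded operation `A^{⊗n} → A` of internal degree `d` with respect to a grading `𝒜`
of `A`: an `n`-multilinear map sending tuples that are homogeneous of degrees `dg i`
into the homogeneous piece of degree `(∑ i, dg i) + d`.  This is an element of
`C^{n,d}(A,A) = Hom^d(A^{⊗n}, A)`. -/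
structure GradedOp (F : Type*) [Field F] (A : Type*) [AddCommGroup A] [Module F A]
    (𝒜 : ℤ → Submodule F A) (n : ℕ) (d : ℤ) where
  toFun : MultilinearMap F (fun _ : Fin n => A) A
  map_graded : ∀ (dg : Fin n → ℤ) (x : Fin n → A), (∀ i, x i ∈ 𝒜 (dg i)) →
    toFun x ∈ 𝒜 ((∑ i, dg i) + d)

namespace Ainf

variable {F : Type*} [Field F] {A : Type*} [AddCommGroup A] [Module F A]

/-- Indexing into a tuple, with junk value `0` out of range. -/
def get {N : ℕ} (x : Fin N → A) (p : ℕ) : A := if h : p < N then x ⟨p, h⟩ else 0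

/-- The block `x_{r+1}, …, x_{r+s}` of a tuple. -/
def blockFun {N : ℕ} (x : Fin N → A) (r s : ℕ) : Fin s → A := fun i => get x (r + (i : ℕ))

/-- The tuple `x_1, …, x_r, a, x_{r+s+1}, …, x_N` obtained from `x` by replacing the block
of length `s` starting at position `r` by the single entry `a`; the intended arity is
`u = r + 1 + (N - (r + s))`. -/
def splice {N : ℕ} (x : Fin N → A) (r s : ℕ) (a : A) {u : ℕ} : Fin u → A :=
  fun j => if (j : ℕ) < r then get x j else if (j : ℕ) = r then a else get x ((j : ℕ) + s - 1)

/-- Sum of the degrees of the entries before position `i`. -/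
def degSum {N : ℕ} (dg : Fin N → ℤ) (i : ℕ) : ℤ :=
  ∑ j : Fin N, if (j : ℕ) < i then dg j else 0

/-- The sign `(-1)^e`. -/
def sgn (F : Type*) [Field F] (e : ℤ) : F := (-1 : F) ^ e

/-- The Gerstenhaber bracket `[f, g]` of `f ∈ C^{n,k}(A,A)` and `g ∈ C^{m,l}(A,A)`,
evaluated on a tuple `x` which is homogeneous of degrees `dg`, following the Koszul
sign rule. -/
def bracketEval (𝒜 : ℤ → Submodule F A) {n m : ℕ} {k l : ℤ}
    (f : GradedOp F A 𝒜 n k) (g : GradedOp F A 𝒜 m l)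
    (dg : Fin (n + m - 1) → ℤ) (x : Fin (n + m - 1) → A) : A :=
  (∑ i : Fin n,
      sgn F ((((n : ℤ) - 1) * ((m : ℤ) - 1) + ((n : ℤ) - 1) * l + ((i : ℕ) : ℤ) * ((m : ℤ) - 1))
          + l * degSum dg (i : ℕ)) •
        f.toFun (splice x (i : ℕ) m (g.toFun (blockFun x (i : ℕ) m))))
  - sgn F (((n : ℤ) + k - 1) * ((m : ℤ) + l - 1)) •
    ∑ i : Fin m,
      sgn F ((((m : ℤ) - 1) * ((n : ℤ) - 1) + ((m : ℤ) - 1) * k + ((i : ℕ) : ℤ) * ((n : ℤ) - 1))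
          + k * degSum dg (i : ℕ)) •
        g.toFun (splice x (i : ℕ) n (f.toFun (blockFun x (i : ℕ) n)))

/-- The A∞ construction equations
`∑ (-1)^{rs+t} m_{r+1+t} (I^{⊗r} ⊗ m_s ⊗ I^{⊗t}) = 0` (`n ≥ 1`), evaluated on
homogeneous tuples with the Koszul sign rule (`m_s` has degree `2 - s`). -/
def AinfEqns (𝒜 : ℤ → Submodule F A) (m : ∀ n : ℕ, GradedOp F A 𝒜 n (2 - (n : ℤ))) : Prop :=
  ∀ (n : ℕ), 1 ≤ n → ∀ (dg : Fin n → ℤ) (x : Fin n → A), (∀ i, x i ∈ 𝒜 (dg i)) →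
    (∑ r : Fin (n + 1), ∑ s : Fin (n + 1 - (r : ℕ)),
      sgn F ((((r : ℕ) * (s : ℕ) + (n - (r : ℕ) - (s : ℕ)) : ℕ) : ℤ)
          + (2 - ((s : ℕ) : ℤ)) * degSum dg (r : ℕ)) •
        (m ((r : ℕ) + 1 + (n - ((r : ℕ) + (s : ℕ))))).toFun
          (splice x (r : ℕ) (s : ℕ) ((m (s : ℕ)).toFun (blockFun x (r : ℕ) (s : ℕ))))) = 0

/-- A strict A∞-algebra structure on the `ℤ`-graded vector space `A = ⊕ₖ 𝒜 k`:
graded maps `mₙ : A^{⊗n} → A` of degree `2 - n` for `n ≥ 1` (we record `m₀ = 0`)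
satisfying the construction equations. -/
structure AinfAlg (F : Type*) [Field F] (A : Type*) [AddCommGroup A] [Module F A]
    (𝒜 : ℤ → Submodule F A) where
  isInternal : DirectSum.IsInternal 𝒜
  m : ∀ n : ℕ, GradedOp F A 𝒜 n (2 - (n : ℤ))
  m_zero : ∀ x, (m 0).toFun x = 0
  ainf : AinfEqns 𝒜 m

/-- The identity map `I ∈ C^{1,0}(A,A)`. -/
def idOp (𝒜 : ℤ → Submodule F A) : GradedOp F A 𝒜 1 0 where
  toFun := MultilinearMap.ofSubsingleton F A A (0 : Fin 1) LinearMap.id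
  map_graded := by
    intro dg x hx
    simpa using hx 0

end Ainf

/-!
Bracketing with a unary operation `g` of degree `0` carries no signs:
`[f, g]` inserts `g` into each slot of `f` and subtracts `g ∘ f`. If `g` acts on each `𝒜 d` as a
scalar `c d`, this multiplies the value of `f` on entries of degrees `dg i` by
`∑ i, c (dg i) - c (∑ i, dg i + deg f)`. For `g = I - E`, that is `c d = 1 - d`, the degrees of the
entries cancel and `arity f + deg f - 1` remains, which is `1` for every `m_k`.
-/

namespace Ainf

variable {F : Type*} [Field F] {A : Type*} [AddCommGroup A] [Module F A]

lemma get_val {n : ℕ} (x : Fin n → A) (i : Fin n) : get x i = x i :=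
  dif_pos i.isLt

lemma blockFun_one {n : ℕ} (x : Fin n → A) (i : Fin n) : blockFun x i 1 = fun _ => x i := by
  funext j
  simp [blockFun, get_val]

lemma blockFun_zero_self {n : ℕ} (x : Fin n → A) : blockFun x 0 n = x := by
  funext j
  simp [blockFun, get_val]

lemma splice_one {n : ℕ} (x : Fin n → A) (i : Fin n) (a : A) :
    splice x i 1 a = Function.update x i a := by
  funext j
  obtain rfl | hji := eq_or_ne j i
  · simp [splice]
  · simp [splice, hji, get_val, Fin.val_ne_of_ne hji]

lemma splice_zero_unary {n : ℕ} (x : Fin n → A) (s : ℕ) (a : A) :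
    splice x 0 s a = fun _ : Fin 1 => a := by
  funext j
  simp [splice]

lemma sgn_zero : sgn F 0 = 1 :=
  zpow_zero _

lemma degSum_zero {n : ℕ} (dg : Fin n → ℤ) : degSum dg 0 = 0 := by
  simp [degSum]

lemma bracketEval_unary {𝒜 : ℤ → Submodule F A} {n : ℕ} {d : ℤ} (f : GradedOp F A 𝒜 n d)
    (g : GradedOp F A 𝒜 1 0) (dg : Fin n → ℤ) (x : Fin n → A) :
    bracketEval 𝒜 f g dg x =
      (∑ i, f.toFun (Function.update x i (g.toFun fun _ => x i))) -
        g.toFun fun _ => f.toFun x := by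
  have slot (i : Fin n) :
      splice x i 1 (g.toFun (blockFun x i 1)) =
        Function.update x i (g.toFun fun _ => x i) := by
    rw [blockFun_one, splice_one]
  have composite :
      splice x 0 n (f.toFun (blockFun x 0 n)) = fun _ : Fin 1 => f.toFun x := by
    rw [blockFun_zero_self, splice_zero_unary]
  simp only [bracketEval, Nat.cast_one, sub_self, mul_zero, zero_mul, add_zero, sgn_zero, one_smul,
    Fin.sum_univ_one, Fin.val_zero, Nat.cast_zero, degSum_zero]
  exact congrArg₂ (· - ·) (Finset.sum_congr rfl fun i _ => congrArg f.toFun (slot i))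
    (congrArg g.toFun composite)

lemma bracketEval_of_forall_mem_smul {𝒜 : ℤ → Submodule F A} {n : ℕ} {d : ℤ}
    (f : GradedOp F A 𝒜 n d) (g : GradedOp F A 𝒜 1 0) (c : ℤ → F)
    (hg : ∀ (e : ℤ) (α : A), α ∈ 𝒜 e → g.toFun (fun _ => α) = c e • α)
    (dg : Fin n → ℤ) (x : Fin n → A) (hx : ∀ i, x i ∈ 𝒜 (dg i)) :
    bracketEval 𝒜 f g dg x = ((∑ i, c (dg i)) - c ((∑ i, dg i) + d)) • f.toFun x := by
  have insertion (i : Fin n) :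
      f.toFun (Function.update x i (g.toFun fun _ => x i)) = c (dg i) • f.toFun x := by
    rw [hg (dg i) (x i) (hx i), f.toFun.map_update_smul, Function.update_eq_self]
  calc bracketEval 𝒜 f g dg x
    _ = (∑ i, c (dg i) • f.toFun x) - c ((∑ i, dg i) + d) • f.toFun x := by
      simp only [bracketEval_unary, insertion, hg _ _ (f.map_graded dg x hx)]
    _ = ((∑ i, c (dg i)) - c ((∑ i, dg i) + d)) • f.toFun x := by
      rw [← Finset.sum_smul, sub_smul]

end Ainf

open Ainf in
theorem bracket_with_id_sub_euler_general {F : Type*} [Field F] {A : Type*} [AddCommGroup A]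
    [Module F A] {𝒜 : ℤ → Submodule F A} {n : ℕ} {d : ℤ} (f : GradedOp F A 𝒜 n d)
    (G : GradedOp F A 𝒜 1 0)
    (hG : ∀ (e : ℤ) (α : A), α ∈ 𝒜 e → G.toFun (fun _ => α) = α - e • α)
    (dg : Fin n → ℤ) (x : Fin n → A) (hx : ∀ i, x i ∈ 𝒜 (dg i)) :
    bracketEval 𝒜 f G dg x = (n + d - 1) • f.toFun x := by
  have hG_smul (e : ℤ) (α : A) (hα : α ∈ 𝒜 e) : G.toFun (fun _ => α) = ((1 - e : ℤ) : F) • α := by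
    rw [hG e α hα, Int.cast_smul_eq_zsmul, sub_smul, one_smul]
  have scalar_eq : (∑ i, (1 - dg i)) - (1 - ((∑ i, dg i) + d)) = n + d - 1 := by
    simp only [Finset.sum_sub_distrib, Finset.sum_const, Finset.card_univ, Fintype.card_fin,
      nsmul_one]
    ring
  rw [bracketEval_of_forall_mem_smul f G (fun e => ((1 - e : ℤ) : F)) hG_smul dg x hx,
    ← Int.cast_sum, ← Int.cast_sub, scalar_eq, Int.cast_smul_eq_zsmul]

open Ainf in
/-- For any strict A∞-algebra `(A, m)`, the Hochschild differential
`D = [m, -]` satisfies `D(I - E) = ∑_{k ≥ 1} m_k = m`, where `I` is the identity map and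
`E` is the euler derivation element (characterized by `E(α) = deg(α) • α` on homogeneous
`α`, so that `(I - E)(α) = α - deg(α) • α`).  Componentwise this says
`[m_k, I - E] = m_k` for every arity `k` (evaluated on homogeneous tuples); in particular
`m` is a coboundary, i.e. the class `[m]` vanishes in `HH^2(A,A)`. -/
theorem bracket_with_id_sub_euler {F : Type*} [Field F] {A : Type*} [AddCommGroup A]
    [Module F A] (𝒜 : ℤ → Submodule F A) (M : AinfAlg F A 𝒜)
    (G : GradedOp F A 𝒜 1 0)
    (hG : ∀ (d : ℤ) (α : A), α ∈ 𝒜 d → G.toFun (fun _ => α) = α - d • α) :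
    ∀ (k : ℕ) (dg : Fin k → ℤ) (x : Fin k → A), (∀ i, x i ∈ 𝒜 (dg i)) →
      bracketEval 𝒜 (M.m k) G dg x = (M.m k).toFun x := by
  intro k dg x hx
  rw [bracket_with_id_sub_euler_general (M.m k) G hG dg x hx,
    show (k : ℤ) + (2 - k) - 1 = 1 by ring, one_smul]
end

section
/- Let (A,m) be a curved A∞-algebra and a ∈ A^2. Then (A,m) can be deformed through an almost identity endomorphism into a curved A∞-algebra (A, m̃) with m̃_0(1) = a if and only if a is invertible, i.e. a ∈ I(A,m). Moreover, if b ∈ MC(a), then the maps m̃_n(x_1,…,x_n) = m(e^b x_1 e^b ⋯ e^b x_n e^b) (for n ≥ 0, with m̃_0(1) = m(e^b) = a) define such a curved A∞ structure, and the family f with f_0(1) = b, f_1 = I, f_n = 0 for n ≥ 2 is an almost identity endomorphism f : (A, m̃) → (A, m). -/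
open scoped BigOperators

namespace Ainf

variable {F : Type*} [Field F] {A : Type*} [AddCommGroup A] [Module F A]

/-- The construction equations of a curved A∞-algebra: for all `n ≥ 0` and all
homogeneous `x_1, …, x_n`,
`∑_{n=r+s+t} (-1)^{δ(x_1,…,x_r)} m_{r+1+t}(x_1, …, x_r, m_s(x_{r+1},…,x_{r+s}), …, x_n) = 0`,
where `δ(x_1, …, x_r) = ∑_{i=1}^r (|x_i| - 1)` and `s = 0` terms insert the curvature
`m_0(1)`. -/
def CurvedEqns (𝒜 : ℤ → Submodule F A) (m : ∀ n : ℕ, GradedOp F A 𝒜 n (2 - (n : ℤ))) :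
    Prop :=
  ∀ (n : ℕ) (dg : Fin n → ℤ) (x : Fin n → A), (∀ i, x i ∈ 𝒜 (dg i)) →
    (∑ r : Fin (n + 1), ∑ s : Fin (n + 1 - (r : ℕ)),
      sgn F (degSum dg (r : ℕ) - (r : ℕ)) •
        (m ((r : ℕ) + 1 + (n - ((r : ℕ) + (s : ℕ))))).toFun
          (splice x (r : ℕ) (s : ℕ) ((m (s : ℕ)).toFun (blockFun x (r : ℕ) (s : ℕ))))) = 0

/-- A curved A∞-algebra structure on the `ℤ`-graded vector space `A = ⊕ₖ 𝒜 k`: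
graded maps `mₙ : A^{⊗n} → A` of degree `2 - n` for `n ≥ 0` (with curvature
`m_0(1) ∈ A^2`) satisfying the construction equations; for simplicity `m_k = 0` for
`k ≫ 1` (all `k ≥ bound`). -/
structure CurvedAinf (F : Type*) [Field F] (A : Type*) [AddCommGroup A] [Module F A]
    (𝒜 : ℤ → Submodule F A) where
  isInternal : DirectSum.IsInternal 𝒜
  m : ∀ n : ℕ, GradedOp F A 𝒜 n (2 - (n : ℤ))
  bound : ℕ
  m_bound : ∀ k, bound ≤ k → ∀ x, (m k).toFun x = 0
  curved : CurvedEqns 𝒜 m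

/-- The expression `m(e^b x_1 e^b x_2 e^b ⋯ e^b x_n e^b)`: the sum over all `l ≥ n` and
all ways of inserting `l - n` copies of `b` between (and around) the ordered inputs
`x_1, …, x_n` of the values `m_l(b,…,b,x_1,b,…,b,x_2,…,b,x_n,b,…,b)`.  For `n = 0`
this is `m(e^b) = ∑_{k ≥ 0} m_k(b,…,b)`.  (The insertion patterns of the `x_i` into
`l` slots are parametrized by the `n`-element subsets `s` of `Fin l`, the `x_i`
occupying the positions of `s` in increasing order.) -/
noncomputable def mDef (M : CurvedAinf F A 𝒜) (b : A) {n : ℕ} (x : Fin n → A) : A :=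
  ∑ᶠ l : ℕ, ∑ s : Finset (Fin l),
    if h : s.card = n then
      (M.m l).toFun (fun j => if hj : j ∈ s then x ((s.orderIsoOfFin h).symm ⟨j, hj⟩) else b)
    else 0

/-- The sum of the parts of a composition before the `j`-th part. -/
def offsetSum {k : ℕ} (c : Fin k → ℕ) (j : Fin k) : ℕ :=
  ∑ j' : Fin k, if j' < j then c j' else 0

/-- The defining equations of a homomorphism of curved A∞-algebras
`f : (A, m^{M1}) → (A, m^{M2})`, a family of graded maps `f_n : A^{⊗n} → A` of degree
`1 - n` (`n ≥ 0`): for all `n ≥ 0` and homogeneous `x_1, …, x_n`,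
`∑_{n=r+s+t} (-1)^{δ(x_1,…,x_r)} f_{r+1+t}(x_1,…,x_r, m^{M1}_s(…), …, x_n)
  = ∑_{n=i_1+⋯+i_k} m^{M2}_k (f_{i_1}(x_1,…), …, f_{i_k}(…,x_n))`,
the right-hand compositions `(i_1, …, i_k)` of `n` into `k` parts `≥ 0` being
parametrized by `Finset.Nat.antidiagonalTuple k n`. -/
def CurvedHomEqns (𝒜 : ℤ → Submodule F A) (M1 M2 : CurvedAinf F A 𝒜)
    (f : ∀ n : ℕ, GradedOp F A 𝒜 n (1 - (n : ℤ))) : Prop :=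
  ∀ (n : ℕ) (dg : Fin n → ℤ) (x : Fin n → A), (∀ i, x i ∈ 𝒜 (dg i)) →
    (∑ r : Fin (n + 1), ∑ s : Fin (n + 1 - (r : ℕ)),
      sgn F (degSum dg (r : ℕ) - (r : ℕ)) •
        (f ((r : ℕ) + 1 + (n - ((r : ℕ) + (s : ℕ))))).toFun
          (splice x (r : ℕ) (s : ℕ) ((M1.m (s : ℕ)).toFun (blockFun x (r : ℕ) (s : ℕ)))))
    = ∑ᶠ k : ℕ, ∑ c ∈ Finset.Nat.antidiagonalTuple k n,
        (M2.m k).toFun (fun j => (f (c j)).toFun (fun i => get x (offsetSum c j + (i : ℕ))))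

end Ainf

/-!
Mark the slots to be filled by `b` with blanks. Then `m(e^b x_1 e^b ⋯ e^b x_n e^b)` is the sum of
`m` over all words obtained from `x_1 ⋯ x_n` by inserting blanks. Cutting such a word into three
consecutive blocks amounts to cutting `x_1 ⋯ x_n` and inserting blanks into each block, and an
insertion into `u c t` restricts to insertions into `u` and `t`. A blank contributes `|b| - 1 = 0`
to the sign `δ`. So the construction equation of the deformed operations at `x_1, …, x_n` is the sum
of the construction equations of `m` at all the filled words, each of which holds.

For a family `f` with `f_0(1) = b`, `f_1 = I` and `f_n = 0` for `n ≥ 2`, only `r = t = 0` survives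
on the left of the homomorphism equations and only compositions into zeros and ones on the right.
They thus say that `m̃_n(x_1, …, x_n) = m(e^b x_1 e^b ⋯ e^b x_n e^b)`, which for `n = 0` is the
Maurer–Cartan equation.
-/

namespace Ainf

section Words

variable {α β B : Type*} [AddCommMonoid B]

theorem eq_of_isSome_of_reduceOption {w w' : List (Option α)}
    (hsome : w.map Option.isSome = w'.map Option.isSome)
    (hred : w.reduceOption = w'.reduceOption) : w = w' := by
  induction w generalizing w' with
  | nil => simpa using hsome
  | cons o w ih =>
    obtain _ | ⟨o', w'⟩ := w'
    · simp at hsome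
    · rw [List.map_cons, List.map_cons, List.cons.injEq] at hsome
      cases o <;> cases o' <;> simp_all [ih hsome.2]

theorem finite_setOf_reduceOption_eq (K : ℕ) (xs : List α) :
    {w : List (Option α) | w.length < K ∧ w.reduceOption = xs}.Finite :=
  Set.Finite.of_injOn (f := List.map Option.isSome) (t := {p | p.length < K})
    (fun w hw => by simpa using hw.1)
    (fun _ hw _ hw' h => eq_of_isSome_of_reduceOption h (hw.2.trans hw'.2.symm))
    (List.finite_length_lt Bool K)

/-- The words of length `< K` obtained by inserting blanks `none` into `xs`.  A blank marks a slot
that will receive a copy of `b`; keeping it distinct from the letters makes the word determine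
where the insertions took place, even if `b` itself occurs in `xs`. -/
noncomputable def insertions (K : ℕ) (xs : List α) : Finset (List (Option α)) :=
  (finite_setOf_reduceOption_eq K xs).toFinset

theorem mem_insertions {K : ℕ} {xs : List α} {w : List (Option α)} :
    w ∈ insertions K xs ↔ w.length < K ∧ w.reduceOption = xs := by
  simp [insertions]

open Classical in
/-- The factorizations `w = u ++ v ++ t` of a word into three consecutive blocks. -/
noncomputable def splits (w : List α) : Finset (List α × List α × List α) :=
  Finset.univ.image fun p : Σ r : Fin (w.length + 1), Fin (w.length + 1 - r) =>
    (w.take p.1, (w.drop p.1).take p.2, (w.drop p.1).drop p.2)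

theorem mem_splits {w u v t : List α} : (u, v, t) ∈ splits w ↔ u ++ (v ++ t) = w := by
  classical
  simp only [splits, Finset.mem_image, Finset.mem_univ, true_and, Prod.mk.injEq]
  constructor
  · rintro ⟨p, rfl, rfl, rfl⟩
    simp only [List.take_append_drop]
  · rintro rfl
    exact ⟨⟨⟨u.length, by simp⟩, ⟨v.length, by simp; omega⟩⟩, by simp⟩

theorem sum_splits {w : List α} {n : ℕ} (hn : w.length = n)
    (Φ : List α → List α → List α → B) :
    ∑ p ∈ splits w, Φ p.1 p.2.1 p.2.2 = ∑ r : Fin (n + 1), ∑ s : Fin (n + 1 - r),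
      Φ (w.take r) ((w.drop r).take s) ((w.drop r).drop s) := by
  classical
  subst hn
  rw [splits, Finset.sum_image, Fintype.sum_sigma]
  rintro ⟨r, s⟩ - ⟨r', s'⟩ - h
  have hlen := And.intro (congrArg (List.length ·.1) h) (congrArg (List.length ·.2.1) h)
  simp only [List.length_take, List.length_drop] at hlen
  obtain rfl : r = r' := by omega
  obtain rfl : s = s' := by omega
  rfl

theorem sum_splits_map (f : α → β) (w : List α) (Φ : List β → List β → List β → B) :
    ∑ p ∈ splits (w.map f), Φ p.1 p.2.1 p.2.2 =
      ∑ p ∈ splits w, Φ (p.1.map f) (p.2.1.map f) (p.2.2.map f) := by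
  rw [sum_splits (w.length_map f), sum_splits rfl (fun u v t => Φ (u.map f) (v.map f) (t.map f))]
  simp only [List.map_take, List.map_drop]

theorem sum_insertions_splits {K : ℕ} (xs : List α)
    (Φ : List (Option α) → List (Option α) → List (Option α) → B)
    (hΦ : ∀ u v t, K ≤ u.length + v.length + t.length → Φ u v t = 0) :
    ∑ w ∈ insertions K xs, ∑ p ∈ splits w, Φ p.1 p.2.1 p.2.2 =
      ∑ q ∈ splits xs, ∑ u ∈ insertions K q.1, ∑ v ∈ insertions K q.2.1,
        ∑ t ∈ insertions K q.2.2, Φ u v t := by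
  simp only [← Finset.sum_product', Finset.sum_sigma']
  refine Finset.sum_bij_ne_zero
    (fun a _ _ => ⟨(a.2.1.reduceOption, a.2.2.1.reduceOption, a.2.2.2.reduceOption), a.2⟩)
    ?_ ?_ ?_ fun _ _ _ => rfl
  · rintro ⟨w, u, v, t⟩ ha -
    simp only [Finset.mem_sigma, mem_insertions, mem_splits] at ha
    obtain ⟨⟨hw, rfl⟩, rfl⟩ := ha
    simp only [List.length_append] at hw
    simp only [Finset.mem_sigma, Finset.mem_product, mem_splits, mem_insertions,
      List.reduceOption_append, and_true, true_and]
    omega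
  · rintro ⟨w, u, v, t⟩ ha - ⟨w', u', v', t'⟩ ha' - h
    simp only [Finset.mem_sigma, mem_splits] at ha ha'
    simp only [Sigma.mk.injEq, heq_eq_eq] at h
    obtain ⟨-, h⟩ := h
    cases h
    rw [← ha.2, ← ha'.2]
  · rintro ⟨⟨ys, vs, ts⟩, u, v, t⟩ ha hne
    simp only [Finset.mem_sigma, Finset.mem_product, mem_splits, mem_insertions] at ha
    obtain ⟨rfl, ⟨-, rfl⟩, ⟨-, rfl⟩, -, rfl⟩ := ha
    refine ⟨⟨u ++ (v ++ t), u, v, t⟩, ?_, hne, rfl⟩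
    have hlt : u.length + v.length + t.length < K := by
      by_contra! hle
      exact hne (hΦ u v t hle)
    simp only [Finset.mem_sigma, mem_splits, mem_insertions, List.reduceOption_append,
      List.length_append, and_true]
    omega

theorem append_some_cons_inj {c : α} {u u' t t' : List (Option α)}
    (h : u ++ some c :: t = u' ++ some c :: t') (hu : u.reduceOption = u'.reduceOption) :
    u = u' ∧ t = t' := by
  induction u generalizing u' with
  | nil =>
    obtain _ | ⟨o, u'⟩ := u'
    · simpa using h
    · obtain ⟨rfl, -⟩ := List.cons.inj h
      simp at hu
  | cons o u ih =>
    obtain _ | ⟨o', u'⟩ := u'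
    · obtain ⟨rfl, -⟩ := List.cons.inj h
      simp at hu
    · obtain ⟨rfl, h⟩ := List.cons.inj h
      cases o <;> simp_all

theorem exists_append_some_cons {w : List (Option α)} {ys zs : List α} {c : α}
    (hw : w.reduceOption = ys ++ c :: zs) :
    ∃ u t, u.reduceOption = ys ∧ t.reduceOption = zs ∧ u ++ some c :: t = w := by
  obtain ⟨u, v, rfl, rfl, hv⟩ := (List.reduceOption_eq_append_iff _ _ _).1 hw
  obtain ⟨blanks, o, t, rfl, hblanks, ho, rfl⟩ := List.filterMap_eq_cons_iff.1 hv
  refine ⟨u ++ blanks, t, ?_, rfl, ?_⟩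
  · rw [List.reduceOption_append, List.reduceOption, List.filterMap_eq_nil_iff.2 hblanks,
      List.append_nil]
  · simp_all

theorem sum_insertions_append_cons {K : ℕ} (ys zs : List α) (c : α) (φ : List (Option α) → B)
    (hφ : ∀ w, K ≤ w.length → φ w = 0) :
    ∑ w ∈ insertions K (ys ++ c :: zs), φ w =
      ∑ u ∈ insertions K ys, ∑ t ∈ insertions K zs, φ (u ++ some c :: t) := by
  rw [← Finset.sum_product']
  refine (Finset.sum_bij_ne_zero (fun p _ _ => p.1 ++ some c :: p.2) ?_ ?_ ?_
    fun _ _ _ => rfl).symm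
  · rintro ⟨u, t⟩ hp hne
    simp only [Finset.mem_product, mem_insertions] at hp
    refine mem_insertions.2 ⟨?_, by
      rw [List.reduceOption_append, List.reduceOption_cons_of_some, hp.1.2, hp.2.2]⟩
    by_contra! hle
    exact hne (hφ _ hle)
  · rintro ⟨u, t⟩ hp - ⟨u', t'⟩ hp' - h
    simp only [Finset.mem_product, mem_insertions] at hp hp'
    obtain ⟨rfl, rfl⟩ := append_some_cons_inj h (hp.1.2.trans hp'.1.2.symm)
    rfl
  · intro w hw hne
    obtain ⟨hlen, hred⟩ := mem_insertions.1 hw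
    obtain ⟨u, t, hu, ht, rfl⟩ := exists_append_some_cons hred
    simp only [List.length_append, List.length_cons] at hlen
    have hu_lt : u.length < K := by omega
    have ht_lt : t.length < K := by omega
    exact ⟨(u, t), Finset.mem_product.2
      ⟨mem_insertions.2 ⟨hu_lt, hu⟩, mem_insertions.2 ⟨ht_lt, ht⟩⟩, hne, rfl⟩

end Words

section EvalWord

variable {F : Type*} [Field F] {A : Type*} [AddCommGroup A] [Module F A]
  {𝒜 : ℤ → Submodule F A} {d : ℕ → ℤ}

/-- The value `m_n(x_1, …, x_n)` of a family of operations on the word `x_1 ⋯ x_n`. -/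
def evalWord (m : ∀ n : ℕ, GradedOp F A 𝒜 n (d n)) (w : List A) : A :=
  (m w.length).toFun w.get

variable (m : ∀ n : ℕ, GradedOp F A 𝒜 n (d n))

theorem evalWord_ofFn {n : ℕ} (x : Fin n → A) : evalWord m (List.ofFn x) = (m n).toFun x := by
  have hcast : ∀ (k : ℕ) (h : k = n) (y : Fin k → A), (∀ i, y i = x (Fin.cast h i)) →
      (m k).toFun y = (m n).toFun x := by
    rintro k rfl y hy
    exact congrArg (m k).toFun (funext hy)
  exact hcast _ List.length_ofFn _ (List.get_ofFn x)

theorem evalWord_set (w : List A) (i : Fin w.length) (c : A) :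
    evalWord m (w.set i c) = (m w.length).toFun (Function.update w.get i c) := by
  rw [← evalWord_ofFn]
  congr 1
  refine List.ext_getElem (by simp) fun j _ _ => ?_
  by_cases hij : (i : ℕ) = j
  · simp [Function.update_apply, Fin.ext_iff, hij]
  · simp [Fin.ext_iff, hij, Ne.symm hij]

theorem evalWord_append_sum_cons {ι : Type*} (I : Finset ι) (c : ι → A) (u t : List A) :
    evalWord m (u ++ (∑ i ∈ I, c i) :: t) = ∑ i ∈ I, evalWord m (u ++ c i :: t) := by
  let i : Fin (u ++ (0 : A) :: t).length := ⟨u.length, by simp⟩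
  have heval : ∀ a, evalWord m (u ++ a :: t) =
      (m (u ++ 0 :: t).length).toFun (Function.update (u ++ 0 :: t).get i a) := fun a => by
    rw [← evalWord_set]
    simp [i]
  simp only [heval, MultilinearMap.map_update_sum]

theorem evalWord_append_zero_cons (u t : List A) : evalWord m (u ++ 0 :: t) = 0 := by
  simpa using evalWord_append_sum_cons m ∅ (fun _ : Empty => 0) u t

end EvalWord

section Degrees

variable {A : Type*}

/-- The total degree `δ(x_1, …, x_n) = ∑ (|x_i| - 1)` of a word whose letters are paired with their
degrees. -/
def shiftedDegree (w : List (ℤ × A)) : ℤ := (w.map (·.1 - 1)).sum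

/-- Fills the blanks of a word with copies of `b`, regarded as an element of degree `1`. -/
def fillBlanks (b : A) (w : List (Option (ℤ × A))) : List (ℤ × A) := w.map (·.getD (1, b))

theorem shiftedDegree_ofFn {n : ℕ} (x : Fin n → ℤ × A) :
    shiftedDegree (List.ofFn x) = ∑ i, (x i).1 - n := by
  simp [shiftedDegree, List.map_ofFn, List.sum_ofFn]

theorem shiftedDegree_take_ofFn {n r : ℕ} (hr : r ≤ n) (x : Fin n → ℤ × A) :
    shiftedDegree ((List.ofFn x).take r) = degSum (fun i => (x i).1) r - r := by
  have hcard : ∑ i : Fin n with i.val < r, (1 : ℤ) = r := by simp [Fin.card_filter_val_lt, hr]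
  simp only [shiftedDegree, degSum, List.map_take, List.map_ofFn, List.sum_take_ofFn,
    Function.comp_apply, Finset.sum_sub_distrib, hcard, Finset.sum_filter]

theorem shiftedDegree_fillBlanks (b : A) (w : List (Option (ℤ × A))) :
    shiftedDegree (fillBlanks b w) = shiftedDegree w.reduceOption := by
  induction w with
  | nil => rfl
  | cons o w ih => cases o <;> simpa [shiftedDegree, fillBlanks] using ih

end Degrees

section Homogeneous

variable {F : Type*} [Field F] {A : Type*} [AddCommGroup A] [Module F A]
  {𝒜 : ℤ → Submodule F A}

/-- The words of pairs `(k, x)` in which every `x` is homogeneous of degree `k`. -/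
def IsHomogeneousWord (𝒜 : ℤ → Submodule F A) (w : List (ℤ × A)) : Prop := ∀ p ∈ w, p.2 ∈ 𝒜 p.1

theorem isHomogeneousWord_ofFn {n : ℕ} {x : Fin n → ℤ × A} :
    IsHomogeneousWord 𝒜 (List.ofFn x) ↔ ∀ i, (x i).2 ∈ 𝒜 (x i).1 :=
  List.forall_mem_ofFn_iff

theorem IsHomogeneousWord.fillBlanks {b : A} (hb : b ∈ 𝒜 1) {w : List (Option (ℤ × A))}
    (hw : IsHomogeneousWord 𝒜 w.reduceOption) : IsHomogeneousWord 𝒜 (fillBlanks b w) := by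
  simp only [IsHomogeneousWord, Ainf.fillBlanks, List.forall_mem_map]
  rintro (_ | p) hp
  · exact hb
  · exact hw p (List.reduceOption_mem_iff.2 hp)

theorem evalWord_mem {k : ℤ} (m : ∀ n : ℕ, GradedOp F A 𝒜 n (k - n)) {w : List (ℤ × A)}
    (hw : IsHomogeneousWord 𝒜 w) : evalWord m (w.map Prod.snd) ∈ 𝒜 (shiftedDegree w + k) := by
  induction w using List.ofFnRec with | _ n x
  rw [shiftedDegree_ofFn, List.map_ofFn, evalWord_ofFn, sub_add_eq_add_sub, add_sub_assoc]
  exact (m n).map_graded _ _ (isHomogeneousWord_ofFn.1 hw)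

end Homogeneous

section Nested

variable {F : Type*} [Field F] {A : Type*} [AddCommGroup A] [Module F A]
  {𝒜 : ℤ → Submodule F A}

theorem ofFn_blockFun {n : ℕ} (x : Fin n → A) {r s : ℕ} (h : r + s ≤ n) :
    List.ofFn (blockFun x r s) = ((List.ofFn x).drop r).take s := by
  refine List.ext_getElem (by simp; omega) fun i hi _ => ?_
  rw [List.length_ofFn] at hi
  simp [blockFun, get, show r + i < n by omega]

theorem ofFn_splice {n : ℕ} (x : Fin n → A) {r s : ℕ} (h : r + s ≤ n) (a : A) :
    List.ofFn (splice x r s a : Fin (r + 1 + (n - (r + s))) → A) =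
      (List.ofFn x).take r ++ a :: ((List.ofFn x).drop r).drop s := by
  refine List.ext_getElem (by simp; omega) fun i hi _ => ?_
  rw [List.length_ofFn] at hi
  rcases lt_trichotomy i r with hir | rfl | hir
  · simp [splice, get, hir, show i < n by omega]
  · simp [splice, show i ≤ n by omega]
  · obtain ⟨k, rfl⟩ : ∃ k, i = r + k + 1 := ⟨i - r - 1, by omega⟩
    have hk : r + s + k < n := by omega
    have hidx : r + k + 1 - r = k + 1 := by omega
    have hpos : r + k + 1 + s - 1 = r + s + k := by omega
    have hr : min r n = r := by omega
    rw [List.getElem_append_right (by simp; omega)]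
    simp [splice, get, hpos, hk, hr, hidx, show ¬ r + k + 1 < r by omega,
      show ¬ r + k + 1 = r by omega]

/-- The term `(-1)^{δ(u)} f(u, m(v), t)` of the construction equations (where `f = m`) and of the
homomorphism equations. -/
def nestedTerm {d e : ℕ → ℤ} (f : ∀ n : ℕ, GradedOp F A 𝒜 n (d n))
    (m : ∀ n : ℕ, GradedOp F A 𝒜 n (e n)) (u v t : List (ℤ × A)) : A :=
  sgn F (shiftedDegree u) •
    evalWord f (u.map Prod.snd ++ evalWord m (v.map Prod.snd) :: t.map Prod.snd)

theorem sum_splits_nestedTerm {d e : ℕ → ℤ} (f : ∀ n : ℕ, GradedOp F A 𝒜 n (d n))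
    (m : ∀ n : ℕ, GradedOp F A 𝒜 n (e n)) {n : ℕ} (dg : Fin n → ℤ) (x : Fin n → A) :
    ∑ p ∈ splits (List.ofFn fun i => (dg i, x i)), nestedTerm f m p.1 p.2.1 p.2.2 =
      ∑ r : Fin (n + 1), ∑ s : Fin (n + 1 - (r : ℕ)), sgn F (degSum dg r - (r : ℕ)) •
        (f ((r : ℕ) + 1 + (n - ((r : ℕ) + (s : ℕ))))).toFun
          (splice x r s ((m s).toFun (blockFun x r s))) := by
  rw [sum_splits List.length_ofFn]
  refine Finset.sum_congr rfl fun r _ => Finset.sum_congr rfl fun s _ => ?_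
  have hr : (r : ℕ) ≤ n := by omega
  have hrs : (r : ℕ) + s ≤ n := by omega
  rw [nestedTerm, shiftedDegree_take_ofFn hr (fun i => (dg i, x i)), ← evalWord_ofFn,
    ← evalWord_ofFn, ofFn_splice x hrs, ofFn_blockFun x hrs]
  simp only [List.map_take, List.map_drop, List.map_ofFn, Function.comp_def]

theorem curvedEqns_iff {m : ∀ n : ℕ, GradedOp F A 𝒜 n (2 - (n : ℤ))} :
    CurvedEqns 𝒜 m ↔ ∀ w, IsHomogeneousWord 𝒜 w →
      ∑ p ∈ splits w, nestedTerm m m p.1 p.2.1 p.2.2 = 0 := by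
  constructor
  · intro hm w hw
    induction w using List.ofFnRec with | _ n x
    exact (sum_splits_nestedTerm m m _ _).trans (hm n _ _ (isHomogeneousWord_ofFn.1 hw))
  · intro hm n dg x hx
    rw [← sum_splits_nestedTerm m m]
    exact hm _ (isHomogeneousWord_ofFn.2 hx)

end Nested

section Patterns

variable {α B : Type*} [AddCommMonoid B]

/-- The word of length `l` carrying the letters `x_1, …, x_n` at the positions in `s`, in increasing
order, and blanks elsewhere: the insertion patterns by which `mDef` is defined. -/
def patternWord {l n : ℕ} (s : Finset (Fin l)) (h : s.card = n) (x : Fin n → α) :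
    Fin l → Option α :=
  fun j => if hj : j ∈ s then some (x ((s.orderIsoOfFin h).symm ⟨j, hj⟩)) else none

theorem isSome_patternWord {l n : ℕ} (s : Finset (Fin l)) (h : s.card = n) (x : Fin n → α)
    (j : Fin l) : (patternWord s h x j).isSome ↔ j ∈ s := by
  by_cases hj : j ∈ s <;> simp [patternWord, hj]

theorem orderIsoOfFin_symm_orderEmbOfFin {l n : ℕ} (s : Finset (Fin l)) (h : s.card = n)
    (i : Fin n) (hi : s.orderEmbOfFin h i ∈ s) :
    (s.orderIsoOfFin h).symm ⟨s.orderEmbOfFin h i, hi⟩ = i :=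
  (s.orderIsoOfFin h).symm_apply_eq.2 rfl

theorem patternWord_orderEmbOfFin {l n : ℕ} (s : Finset (Fin l)) (h : s.card = n) (x : Fin n → α)
    (i : Fin n) : patternWord s h x (s.orderEmbOfFin h i) = some (x i) := by
  rw [patternWord, dif_pos (s.orderEmbOfFin_mem h i), orderIsoOfFin_symm_orderEmbOfFin]

theorem filter_mem_finRange {l n : ℕ} (s : Finset (Fin l)) (h : s.card = n) :
    (List.finRange l).filter (· ∈ s) = (List.finRange n).map (s.orderEmbOfFin h) := by
  refine List.SortedLT.eq_of_mem_iff ?_ ?_ fun j => ?_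
  · exact ((List.sortedLT_finRange l).pairwise.filter _).sortedLT
  · rw [Finset.listMap_orderEmbOfFin_finRange]
    exact s.sortedLT_sort
  · simp

theorem reduceOption_patternWord {l n : ℕ} (s : Finset (Fin l)) (h : s.card = n) (x : Fin n → α) :
    (List.ofFn (patternWord s h x)).reduceOption = List.ofFn x := by
  have hsome : (List.finRange l).filterMap (patternWord s h x) =
      ((List.finRange l).filter (· ∈ s)).filterMap (patternWord s h x) := by
    rw [List.filterMap_filter]
    refine List.filterMap_congr fun j _ => ?_
    by_cases hj : j ∈ s <;> simp [patternWord, hj]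
  rw [List.ofFn_eq_map, List.reduceOption, List.filterMap_map, Function.id_comp, hsome,
    filter_mem_finRange s h, List.filterMap_map, List.ofFn_eq_map, ← List.filterMap_eq_map]
  exact List.filterMap_congr fun i _ => patternWord_orderEmbOfFin s h x i

theorem card_isSome_eq_length_reduceOption (w : List (Option α)) :
    (Finset.univ.filter fun j : Fin w.length => (w.get j).isSome).card = w.reduceOption.length := by
  have hlength := congrArg List.length (filter_mem_finRange
    (Finset.univ.filter fun j : Fin w.length => (w.get j).isSome) rfl)
  rw [List.length_map, List.length_finRange] at hlength
  rw [← hlength, List.reduceOption_length_eq]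
  conv_rhs => rw [← List.ofFn_get w, List.ofFn_eq_map, List.filter_map, List.length_map]
  simp [Function.comp_def]

theorem exists_patternWord_eq {n : ℕ} {x : Fin n → α} {w : List (Option α)}
    (hw : w.reduceOption = List.ofFn x) :
    ∃ (s : Finset (Fin w.length)) (h : s.card = n), List.ofFn (patternWord s h x) = w := by
  have hcard := card_isSome_eq_length_reduceOption w
  rw [hw, List.length_ofFn] at hcard
  refine ⟨_, hcard, eq_of_isSome_of_reduceOption ?_ ((reduceOption_patternWord ..).trans hw.symm)⟩
  refine List.ext_getElem (by simp) fun j _ _ => ?_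
  rw [Bool.eq_iff_iff]
  simp [isSome_patternWord]

theorem sum_patternWord_eq_sum_insertions (K : ℕ) {n : ℕ} (x : Fin n → α)
    (φ : List (Option α) → B) :
    (∑ l ∈ Finset.range K, ∑ s : Finset (Fin l),
      if h : s.card = n then φ (List.ofFn (patternWord s h x)) else 0) =
      ∑ w ∈ insertions K (List.ofFn x), φ w := by
  have hcard : ∀ {a : Σ l, Finset (Fin l)}, (if h : a.2.card = n then
      φ (List.ofFn (patternWord a.2 h x)) else 0) ≠ 0 → a.2.card = n := fun hne =>
    by_contra fun h => hne (dif_neg h)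
  rw [Finset.sum_sigma']
  refine Finset.sum_bij_ne_zero (fun a _ hne => List.ofFn (patternWord a.2 (hcard hne) x))
    ?_ ?_ ?_ ?_
  · rintro ⟨l, s⟩ hl hne
    simp only [Finset.mem_sigma, Finset.mem_range] at hl
    exact mem_insertions.2 ⟨by simpa using hl.1, reduceOption_patternWord s _ x⟩
  · rintro ⟨l, s⟩ - hne ⟨l', s'⟩ - hne' heq
    obtain rfl : l = l' := by simpa using congrArg List.length heq
    have hfun := List.ofFn_injective heq
    have hs : s = s' := by
      ext j
      rw [← isSome_patternWord s (hcard hne) x, ← isSome_patternWord s' (hcard hne') x]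
      exact iff_of_eq (congrArg (fun p => (p j).isSome = true) hfun)
    rw [hs]
  · intro w hw hne
    obtain ⟨hlen, hred⟩ := mem_insertions.1 hw
    obtain ⟨s, h, hs⟩ := exists_patternWord_eq hred
    refine ⟨⟨w.length, s⟩, by simpa using hlen, ?_, hs⟩
    rwa [dif_pos h, hs]
  · rintro ⟨l, s⟩ - hne
    exact dif_pos (hcard hne)

end Patterns

section Deformation

variable {F : Type*} [Field F] {A : Type*} [AddCommGroup A] [Module F A]
  {𝒜 : ℤ → Submodule F A}

theorem evalWord_eq_zero_of_bound_le (M : CurvedAinf F A 𝒜) {w : List A}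
    (hw : M.bound ≤ w.length) : evalWord M.m w = 0 :=
  M.m_bound _ hw _

theorem mDef_eq_sum_range (M : CurvedAinf F A 𝒜) (b : A) {n : ℕ} (x : Fin n → A) {K : ℕ}
    (hK : M.bound ≤ K) :
    mDef M b x = ∑ l ∈ Finset.range K, ∑ s : Finset (Fin l), if h : s.card = n then
      (M.m l).toFun (fun j => if hj : j ∈ s then x ((s.orderIsoOfFin h).symm ⟨j, hj⟩) else b)
      else 0 := by
  refine finsum_eq_sum_of_support_subset _ fun l hl => ?_
  rw [Finset.coe_range, Set.mem_Iio]
  by_contra! hle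
  refine hl (Finset.sum_eq_zero fun s _ => ?_)
  split_ifs with h
  · exact M.m_bound l (hK.trans hle) _
  · rfl

theorem mDef_eq_sum_insertions (M : CurvedAinf F A 𝒜) (b : A) {n : ℕ} (x : Fin n → ℤ × A) {K : ℕ}
    (hK : M.bound ≤ K) :
    mDef M b (fun i => (x i).2) =
      ∑ w ∈ insertions K (List.ofFn x), evalWord M.m ((fillBlanks b w).map Prod.snd) := by
  rw [mDef_eq_sum_range M b _ hK, ← sum_patternWord_eq_sum_insertions]
  refine Finset.sum_congr rfl fun l _ => Finset.sum_congr rfl fun s _ => ?_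
  refine dite_congr rfl (fun h => ?_) fun _ => rfl
  rw [fillBlanks, List.map_map, List.map_ofFn, evalWord_ofFn]
  congr 1
  ext j
  by_cases hj : j ∈ s <;> simp [patternWord, hj]

/-- The multilinear map `(x_1, …, x_n) ↦ m(e^b x_1 e^b ⋯ e^b x_n e^b)`. -/
noncomputable def mDefMultilinear (M : CurvedAinf F A 𝒜) (b : A) (n : ℕ) :
    MultilinearMap F (fun _ : Fin n => A) A :=
  ∑ l ∈ Finset.range M.bound, ∑ s : Finset (Fin l),
    if h : s.card = n then (M.m l).toFun.restr s h b else 0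

theorem mDefMultilinear_apply (M : CurvedAinf F A 𝒜) (b : A) {n : ℕ} (x : Fin n → A) :
    mDefMultilinear M b n x = mDef M b x := by
  rw [mDef_eq_sum_range M b x le_rfl, mDefMultilinear]
  simp only [sum_apply]
  refine Finset.sum_congr rfl fun l _ => Finset.sum_congr rfl fun s _ => ?_
  split_ifs <;> rfl

theorem mDef_mem (M : CurvedAinf F A 𝒜) {b : A} (hb : b ∈ 𝒜 1) {n : ℕ} (dg : Fin n → ℤ)
    (x : Fin n → A) (hx : ∀ i, x i ∈ 𝒜 (dg i)) :
    mDef M b x ∈ 𝒜 (∑ i, dg i + (2 - n)) := by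
  rw [mDef_eq_sum_insertions M b (fun i => (dg i, x i)) le_rfl]
  refine Submodule.sum_mem _ fun w hw => ?_
  obtain ⟨-, hred⟩ := mem_insertions.1 hw
  have hhom : IsHomogeneousWord 𝒜 w.reduceOption := hred ▸ isHomogeneousWord_ofFn.2 hx
  have hmem := evalWord_mem M.m (hhom.fillBlanks hb)
  rwa [shiftedDegree_fillBlanks, hred, shiftedDegree_ofFn, sub_add_eq_add_sub,
    add_sub_assoc] at hmem

theorem mDef_eq_zero_of_bound_le (M : CurvedAinf F A 𝒜) (b : A) {n : ℕ} (hn : M.bound ≤ n)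
    (x : Fin n → A) : mDef M b x = 0 := by
  rw [mDef_eq_sum_range M b x le_rfl]
  refine Finset.sum_eq_zero fun l hl => Finset.sum_eq_zero fun s _ => dif_neg ?_
  have hcard := s.card_le_univ
  rw [Fintype.card_fin] at hcard
  have hl := Finset.mem_range.1 hl
  omega

/-- The deformed operations `m̃_n(x_1, …, x_n) = m(e^b x_1 e^b ⋯ e^b x_n e^b)`. -/
noncomputable def deformedOp (M : CurvedAinf F A 𝒜) {b : A} (hb : b ∈ 𝒜 1) (n : ℕ) :
    GradedOp F A 𝒜 n (2 - n) where
  toFun := mDefMultilinear M b n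
  map_graded dg x hx := by
    rw [mDefMultilinear_apply]
    exact mDef_mem M hb dg x hx

theorem evalWord_deformedOp (M : CurvedAinf F A 𝒜) {b : A} (hb : b ∈ 𝒜 1) {K : ℕ}
    (hK : M.bound ≤ K) (xs : List (ℤ × A)) :
    evalWord (deformedOp M hb) (xs.map Prod.snd) =
      ∑ w ∈ insertions K xs, evalWord M.m ((fillBlanks b w).map Prod.snd) := by
  induction xs using List.ofFnRec with | _ n x
  rw [List.map_ofFn, evalWord_ofFn, ← mDef_eq_sum_insertions M b x hK]
  exact mDefMultilinear_apply M b _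

theorem evalWord_deformedOp_append_cons (M : CurvedAinf F A 𝒜) {b : A} (hb : b ∈ 𝒜 1) {K : ℕ}
    (hK : M.bound ≤ K) (c : A) (ys zs : List (ℤ × A)) :
    evalWord (deformedOp M hb) (ys.map Prod.snd ++ c :: zs.map Prod.snd) =
      ∑ u ∈ insertions K ys, ∑ t ∈ insertions K zs,
        evalWord M.m ((fillBlanks b u).map Prod.snd ++ c :: (fillBlanks b t).map Prod.snd) := by
  have hvanish : ∀ w : List (Option (ℤ × A)), K ≤ w.length →
      evalWord M.m ((fillBlanks b w).map Prod.snd) = 0 := fun w hw =>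
    evalWord_eq_zero_of_bound_le M (by simpa [fillBlanks] using hK.trans hw)
  have hword : ys.map Prod.snd ++ c :: zs.map Prod.snd =
      (ys ++ ((0 : ℤ), c) :: zs).map Prod.snd := by simp
  rw [hword, evalWord_deformedOp M hb hK, sum_insertions_append_cons _ _ _ _ hvanish]
  simp only [fillBlanks, List.map_append, List.map_cons, Option.getD_some]

theorem nestedTerm_deformedOp (M : CurvedAinf F A 𝒜) {b : A} (hb : b ∈ 𝒜 1) {K : ℕ}
    (hK : M.bound ≤ K) (ys vs zs : List (ℤ × A)) :
    nestedTerm (deformedOp M hb) (deformedOp M hb) ys vs zs =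
      ∑ u ∈ insertions K ys, ∑ v ∈ insertions K vs, ∑ t ∈ insertions K zs,
        nestedTerm M.m M.m (fillBlanks b u) (fillBlanks b v) (fillBlanks b t) := by
  rw [nestedTerm, evalWord_deformedOp_append_cons M hb hK, Finset.smul_sum]
  refine Finset.sum_congr rfl fun u hu => ?_
  rw [← (mem_insertions.1 hu).2, ← shiftedDegree_fillBlanks b u, evalWord_deformedOp M hb hK]
  simp only [evalWord_append_sum_cons]
  rw [Finset.sum_comm]
  simp only [Finset.smul_sum, nestedTerm]

theorem nestedTerm_eq_zero_of_bound_le (M : CurvedAinf F A 𝒜) {u v t : List (ℤ × A)}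
    (h : 2 * M.bound ≤ u.length + v.length + t.length) : nestedTerm M.m M.m u v t = 0 := by
  by_cases hv : M.bound ≤ v.length
  · have hinner : evalWord M.m (v.map Prod.snd) = 0 :=
      evalWord_eq_zero_of_bound_le M (by simpa using hv)
    rw [nestedTerm, hinner, evalWord_append_zero_cons, smul_zero]
  · rw [nestedTerm, evalWord_eq_zero_of_bound_le M (by simp; omega), smul_zero]

theorem curvedEqns_deformedOp (M : CurvedAinf F A 𝒜) {b : A} (hb : b ∈ 𝒜 1) :
    CurvedEqns 𝒜 (deformedOp M hb) := by
  have hK : M.bound ≤ 2 * M.bound := by omega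
  refine curvedEqns_iff.2 fun xs hxs => ?_
  calc ∑ q ∈ splits xs, nestedTerm (deformedOp M hb) (deformedOp M hb) q.1 q.2.1 q.2.2
    _ = ∑ q ∈ splits xs, ∑ u ∈ insertions (2 * M.bound) q.1,
          ∑ v ∈ insertions (2 * M.bound) q.2.1, ∑ t ∈ insertions (2 * M.bound) q.2.2,
            nestedTerm M.m M.m (fillBlanks b u) (fillBlanks b v) (fillBlanks b t) :=
      Finset.sum_congr rfl fun _ _ => nestedTerm_deformedOp M hb hK _ _ _
    _ = ∑ w ∈ insertions (2 * M.bound) xs, ∑ p ∈ splits w,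
          nestedTerm M.m M.m (fillBlanks b p.1) (fillBlanks b p.2.1) (fillBlanks b p.2.2) :=
      (sum_insertions_splits xs
        (fun u v t => nestedTerm M.m M.m (fillBlanks b u) (fillBlanks b v) (fillBlanks b t))
        fun u v t h => nestedTerm_eq_zero_of_bound_le M (by simpa [fillBlanks] using h)).symm
    _ = ∑ w ∈ insertions (2 * M.bound) xs, ∑ p ∈ splits (fillBlanks b w),
          nestedTerm M.m M.m p.1 p.2.1 p.2.2 :=
      Finset.sum_congr rfl fun w _ => (sum_splits_map _ w (nestedTerm M.m M.m)).symm
    _ = 0 := Finset.sum_eq_zero fun w hw => by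
      have hred : IsHomogeneousWord 𝒜 w.reduceOption := (mem_insertions.1 hw).2.symm ▸ hxs
      exact curvedEqns_iff.1 M.curved _ (hred.fillBlanks hb)

/-- The deformation of a curved `A∞`-algebra by `b ∈ A^1`, with curvature `m(e^b)`. -/
noncomputable def deform (M : CurvedAinf F A 𝒜) {b : A} (hb : b ∈ 𝒜 1) : CurvedAinf F A 𝒜 where
  isInternal := M.isInternal
  m := deformedOp M hb
  bound := M.bound
  m_bound _ hn x := (mDefMultilinear_apply M b x).trans (mDef_eq_zero_of_bound_le M b hn x)
  curved := curvedEqns_deformedOp M hb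

theorem deform_apply (M : CurvedAinf F A 𝒜) {b : A} (hb : b ∈ 𝒜 1) {n : ℕ} (x : Fin n → A) :
    ((deform M hb).m n).toFun x = mDef M b x :=
  mDefMultilinear_apply M b x

end Deformation

section Compositions

theorem card_filter_lt_eq_orderIsoOfFin_symm {l n : ℕ} (s : Finset (Fin l)) (h : s.card = n)
    {j : Fin l} (hj : j ∈ s) :
    (s.filter (· < j)).card = (s.orderIsoOfFin h).symm ⟨j, hj⟩ := by
  obtain ⟨i, rfl⟩ := (s.range_orderEmbOfFin h).ge hj
  have hfilter : s.filter (· < s.orderEmbOfFin h i) =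
      (Finset.Iio i).map (s.orderEmbOfFin h).toEmbedding := by
    ext k
    simp only [Finset.mem_filter, Finset.mem_map, Finset.mem_Iio, RelEmbedding.coe_toEmbedding]
    constructor
    · rintro ⟨hk, hlt⟩
      obtain ⟨i', rfl⟩ := (s.range_orderEmbOfFin h).ge hk
      exact ⟨i', (s.orderEmbOfFin h).lt_iff_lt.1 hlt, rfl⟩
    · rintro ⟨i', hlt, rfl⟩
      exact ⟨s.orderEmbOfFin_mem h i', (s.orderEmbOfFin h).lt_iff_lt.2 hlt⟩
  rw [orderIsoOfFin_symm_orderEmbOfFin, hfilter, Finset.card_map, Fin.card_Iio]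

theorem offsetSum_ite_mem {k : ℕ} (s : Finset (Fin k)) (j : Fin k) :
    offsetSum (fun i => if i ∈ s then 1 else 0) j = (s.filter (· < j)).card := by
  rw [offsetSum, ← Finset.sum_filter, ← Finset.card_filter, Finset.filter_filter]
  congr 1
  ext i
  simp [and_comm]

theorem sum_antidiagonalTuple_eq_sum_finset {B : Type*} [AddCommMonoid B] (k n : ℕ)
    (Φ : (Fin k → ℕ) → B) (hΦ : ∀ c j, 2 ≤ c j → Φ c = 0) :
    ∑ c ∈ Finset.Nat.antidiagonalTuple k n, Φ c =
      ∑ s : Finset (Fin k), if s.card = n then Φ (fun j => if j ∈ s then 1 else 0) else 0 := by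
  rw [← Finset.sum_filter]
  symm
  refine Finset.sum_bij_ne_zero (fun s _ _ j => if j ∈ s then 1 else 0) ?_ ?_ ?_ fun _ _ _ => rfl
  · intro s hs _
    rw [Finset.Nat.mem_antidiagonalTuple]
    simpa using hs
  · intro s _ _ t _ _ hst
    ext j
    have hj := congrFun hst j
    by_cases hs : j ∈ s <;> by_cases ht : j ∈ t <;> simp_all
  · intro c hc hne
    have hlt : ∀ j, c j < 2 := by
      by_contra! hle
      obtain ⟨j, hj⟩ := hle
      exact hne (hΦ c j hj)
    have hsupp : (fun j => if j ∈ Finset.univ.filter (c · = 1) then 1 else 0) = c := by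
      funext j
      have hj := hlt j
      simp only [Finset.mem_filter, Finset.mem_univ, true_and]
      split_ifs <;> omega
    refine ⟨Finset.univ.filter (c · = 1), ?_, by rwa [hsupp], hsupp⟩
    rw [Finset.Nat.mem_antidiagonalTuple, ← hsupp] at hc
    simpa using hc

end Compositions

section AlmostIdentity

variable {F : Type*} [Field F] {A : Type*} [AddCommGroup A] [Module F A]
  {𝒜 : ℤ → Submodule F A} {d : ℕ → ℤ}

/-- The shape of an almost identity endomorphism: `f_0(1) = b`, `f_1 = I` and `f_n = 0` for
`n ≥ 2`. The homomorphism equations are not part of the predicate. -/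
structure IsAlmostIdentity (f : ∀ n : ℕ, GradedOp F A 𝒜 n (d n)) (b : A) : Prop where
  zero_apply : (f 0).toFun (fun i => i.elim0) = b
  one_apply : ∀ x : Fin 1 → A, (f 1).toFun x = x 0
  apply_eq_zero_of_two_le : ∀ n, 2 ≤ n → ∀ x, (f n).toFun x = 0

namespace IsAlmostIdentity

variable {f : ∀ n : ℕ, GradedOp F A 𝒜 n (d n)} {b : A}

theorem apply_of_arity_zero (hf : IsAlmostIdentity f b) {k : ℕ} (hk : k = 0) (x : Fin k → A) :
    (f k).toFun x = b := by
  subst hk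
  rw [← hf.zero_apply]
  exact congrArg _ (Subsingleton.elim _ _)

theorem apply_of_arity_one (hf : IsAlmostIdentity f b) {k : ℕ} (hk : k = 1) (x : Fin k → A) :
    (f k).toFun x = x ⟨0, by omega⟩ := by
  subst hk
  exact hf.one_apply x

theorem sum_splits_nestedTerm (hf : IsAlmostIdentity f b) {e : ℕ → ℤ}
    (m : ∀ n : ℕ, GradedOp F A 𝒜 n (e n)) (w : List (ℤ × A)) :
    ∑ p ∈ splits w, nestedTerm f m p.1 p.2.1 p.2.2 = evalWord m (w.map Prod.snd) := by
  rw [Finset.sum_eq_single_of_mem ([], w, []) (mem_splits.2 (by simp))]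
  · have hone : evalWord f [evalWord m (w.map Prod.snd)] = evalWord m (w.map Prod.snd) :=
      hf.one_apply _
    simp [nestedTerm, hone, shiftedDegree, sgn]
  · rintro ⟨u, v, t⟩ hp hne
    have hpos : 0 < u.length ∨ 0 < t.length := by
      by_contra! hle
      simp only [Nat.le_zero, List.length_eq_zero_iff] at hle
      obtain ⟨rfl, rfl⟩ := hle
      exact hne (by simpa using mem_splits.1 hp)
    have hzero : evalWord f (u.map Prod.snd ++ evalWord m (v.map Prod.snd) :: t.map Prod.snd) = 0 :=
      hf.apply_eq_zero_of_two_le _ (by simp; omega) _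
    rw [nestedTerm, hzero, smul_zero]

theorem apply_block (hf : IsAlmostIdentity f b) {k n : ℕ} (x : Fin n → A) {s : Finset (Fin k)}
    (h : s.card = n) (j : Fin k) :
    (f (if j ∈ s then 1 else 0)).toFun
        (fun i => get x (offsetSum (fun j => if j ∈ s then 1 else 0) j + (i : ℕ))) =
      if hj : j ∈ s then x ((s.orderIsoOfFin h).symm ⟨j, hj⟩) else b := by
  split_ifs with hj
  · rw [hf.apply_of_arity_one (if_pos hj), offsetSum_ite_mem,
      card_filter_lt_eq_orderIsoOfFin_symm s h hj]
    simp [get]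
  · exact hf.apply_of_arity_zero (if_neg hj) _

theorem finsum_antidiagonalTuple (hf : IsAlmostIdentity f b) (M : CurvedAinf F A 𝒜) {n : ℕ}
    (x : Fin n → A) :
    ∑ᶠ k : ℕ, ∑ c ∈ Finset.Nat.antidiagonalTuple k n,
      (M.m k).toFun (fun j => (f (c j)).toFun (fun i => get x (offsetSum c j + (i : ℕ)))) =
      mDef M b x := by
  refine finsum_congr fun k => ?_
  rw [sum_antidiagonalTuple_eq_sum_finset k n _ fun c j hj =>
    MultilinearMap.map_coord_zero _ j (hf.apply_eq_zero_of_two_le _ hj _)]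
  refine Finset.sum_congr rfl fun s _ => dite_congr rfl (fun h => ?_) fun _ => rfl
  exact congrArg _ (funext fun j => hf.apply_block x h j)

theorem curvedHomEqns_iff {f : ∀ n : ℕ, GradedOp F A 𝒜 n (1 - (n : ℤ))}
    (hf : IsAlmostIdentity f b) {M1 M : CurvedAinf F A 𝒜} :
    CurvedHomEqns 𝒜 M1 M f ↔ ∀ (n : ℕ) (dg : Fin n → ℤ) (x : Fin n → A),
      (∀ i, x i ∈ 𝒜 (dg i)) → (M1.m n).toFun x = mDef M b x := by
  refine forall₄_congr fun n dg x _ => ?_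
  rw [← Ainf.sum_splits_nestedTerm, hf.sum_splits_nestedTerm, hf.finsum_antidiagonalTuple,
    List.map_ofFn, evalWord_ofFn]
  rfl

theorem mem_one {f : ∀ n : ℕ, GradedOp F A 𝒜 n (1 - (n : ℤ))} (hf : IsAlmostIdentity f b) :
    b ∈ 𝒜 1 := by
  simpa [hf.zero_apply] using
    (f 0).map_graded (fun i => i.elim0) (fun i => i.elim0) fun i => i.elim0

end IsAlmostIdentity

/-- The almost identity family with `f_0(1) = b`. -/
noncomputable def almostIdentity {b : A} (hb : b ∈ 𝒜 1) :
    ∀ n : ℕ, GradedOp F A 𝒜 n (1 - (n : ℤ))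
  | 0 => ⟨MultilinearMap.constOfIsEmpty F _ b, fun _ _ _ => by simpa using hb⟩
  | 1 => ⟨MultilinearMap.ofSubsingleton F A A 0 LinearMap.id, fun _ _ hx => by simpa using hx 0⟩
  | _ + 2 => ⟨0, fun _ _ _ => Submodule.zero_mem _⟩

theorem isAlmostIdentity_almostIdentity {b : A} (hb : b ∈ 𝒜 1) :
    IsAlmostIdentity (almostIdentity hb) b where
  zero_apply := rfl
  one_apply _ := rfl
  apply_eq_zero_of_two_le
    | 0, h, _ => by omega
    | 1, h, _ => by omega
    | _ + 2, _, _ => rfl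

theorem IsAlmostIdentity.curvedHomEqns_deform {b : A} {M : CurvedAinf F A 𝒜}
    {f : ∀ n : ℕ, GradedOp F A 𝒜 n (1 - (n : ℤ))} (hf : IsAlmostIdentity f b) :
    CurvedHomEqns 𝒜 (deform M hf.mem_one) M f :=
  hf.curvedHomEqns_iff.2 fun _ _ x _ => deform_apply M hf.mem_one x

end AlmostIdentity

end Ainf

open Ainf in
/-- Let `(A, m)` be a curved A∞-algebra and `a ∈ A^2`.  Then `(A, m)`
can be deformed through an almost identity endomorphism into a curved A∞-algebra
`(A, m̃)` with `m̃_0(1) = a` if and only if `a` is invertible, i.e. `a ∈ I(A, m)`,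
meaning that the Maurer–Cartan equation `m(e^b) = a` has a solution `b ∈ A^1`
(`b ∈ MC(a)`).  Moreover, if `b ∈ MC(a)` then the maps
`m̃_n(x_1, …, x_n) = m(e^b x_1 e^b ⋯ e^b x_n e^b)` (with `m̃_0(1) = m(e^b) = a`)
define such a curved A∞ structure, and the family `f` with `f_0(1) = b`, `f_1 = I`,
`f_n = 0` for `n ≥ 2` is an almost identity endomorphism `f : (A, m̃) → (A, m)`. -/
theorem deformation_iff_invertible {F : Type*} [Field F] {A : Type*}
    [AddCommGroup A] [Module F A] (𝒜 : ℤ → Submodule F A)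
    (M : CurvedAinf F A 𝒜) (a : A) (ha : a ∈ 𝒜 2) :
    ((∃ (M1 : CurvedAinf F A 𝒜) (f : ∀ n : ℕ, GradedOp F A 𝒜 n (1 - (n : ℤ))),
        CurvedHomEqns 𝒜 M1 M f ∧ (∀ x : Fin 1 → A, (f 1).toFun x = x 0) ∧
        (∀ n, 2 ≤ n → ∀ x, (f n).toFun x = 0) ∧
        (M1.m 0).toFun (fun i => i.elim0) = a) ↔
      (∃ b, b ∈ 𝒜 1 ∧ mDef M b (fun i : Fin 0 => i.elim0) = a)) ∧
    (∀ b, b ∈ 𝒜 1 → mDef M b (fun i : Fin 0 => i.elim0) = a →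
      ∃ M1 : CurvedAinf F A 𝒜,
        (∀ (n : ℕ) (x : Fin n → A), (M1.m n).toFun x = mDef M b x) ∧
        ∀ f : ∀ n : ℕ, GradedOp F A 𝒜 n (1 - (n : ℤ)),
          (f 0).toFun (fun i => i.elim0) = b →
          (∀ x : Fin 1 → A, (f 1).toFun x = x 0) →
          (∀ n, 2 ≤ n → ∀ x, (f n).toFun x = 0) →
          CurvedHomEqns 𝒜 M1 M f) := by
  refine ⟨⟨?_, ?_⟩, fun b hb _ => ⟨deform M hb, fun _ => deform_apply M hb, ?_⟩⟩
  · rintro ⟨M1, f, hom, hf_one, hf_zero, hcurv⟩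
    have hf : IsAlmostIdentity f _ := ⟨rfl, hf_one, hf_zero⟩
    have heq := hf.curvedHomEqns_iff.1 hom 0 (fun i => i.elim0) (fun i => i.elim0) fun i => i.elim0
    exact ⟨_, hf.mem_one, heq.symm.trans hcurv⟩
  · rintro ⟨b, hb, hMC⟩
    have hf := isAlmostIdentity_almostIdentity hb
    exact ⟨deform M hb, almostIdentity hb, hf.curvedHomEqns_deform, hf.one_apply,
      hf.apply_eq_zero_of_two_le, (deform_apply M hb _).trans hMC⟩
  · intro f hf_b hf_one hf_zero
    exact IsAlmostIdentity.curvedHomEqns_deform ⟨hf_b, hf_one, hf_zero⟩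
end

section
/- Let (A,m) be a curved A∞-algebra and let b ∈ A^1 be an element with the partial unital property (m_k vanishes whenever b is one of its inputs, for all k ≥ 3) such that m_2(b,b) = 0 and m_0(1) + m_1(b) ∈ Z(m_2). Then b is a solution of the obstruction equation: m(e^b m(e^b) e^b x e^b) = (−1)^{|x|} m(e^b x e^b m(e^b) e^b) for all homogeneous x ∈ A. -/
open scoped BigOperators

/-!
Since `b` is killed by all operations of arity at least three, `m(e^b y e^b z e^b)` loses every
summand containing a `b`, and so equals `m_2(y, z)`; likewise
`m(e^b) = m_0(1) + m_1(b) + m_2(b, b)`. The obstruction equation for `b` therefore says exactly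
that this element is in the center of `m_2`.
-/

namespace Ainf

section Insertion

variable {α B : Type*} {l n : ℕ}

/-- The tuple of length `l` whose entries at the positions in `s` are `x_1, …, x_n` in this order
and whose other entries are `b`: one insertion pattern of `m_l(b,…,b,x_1,b,…,b,x_n,b,…,b)`. -/
def insertTuple (b : α) (x : Fin n → α) (s : Finset (Fin l)) (hs : s.card = n) : Fin l → α :=
  fun j => if hj : j ∈ s then x ((s.orderIsoOfFin hs).symm ⟨j, hj⟩) else b

theorem insertTuple_of_notMem (b : α) (x : Fin n → α) {s : Finset (Fin l)} (hs : s.card = n)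
    {j : Fin l} (hj : j ∉ s) : insertTuple b x s hs j = b :=
  dif_neg hj

theorem insertTuple_empty (b : α) (x : Fin 0 → α) :
    insertTuple b x (∅ : Finset (Fin l)) Finset.card_empty = fun _ => b :=
  funext fun j => insertTuple_of_notMem b x _ (Finset.notMem_empty j)

theorem insertTuple_univ (b : α) (x : Fin n → α) :
    insertTuple b x Finset.univ (Finset.card_fin n) = x := by
  funext j
  have position_eq :
      (Finset.univ.orderIsoOfFin (Finset.card_fin n)).symm ⟨j, Finset.mem_univ j⟩ = j := by
    rw [Subsingleton.elim (Finset.univ.orderIsoOfFin (Finset.card_fin n))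
      (OrderIso.Set.univ.symm.trans (OrderIso.setCongr _ _ Finset.coe_univ.symm))]
    rfl
  rw [insertTuple, dif_pos (Finset.mem_univ j), position_eq]

/-- The property of a map `φ` of `l` variables of vanishing whenever one of its inputs is `b`;
the partial unital property imposes it on every `m_k` with `k ≥ 3`. -/
def VanishesAt [Zero B] (φ : (Fin l → α) → B) (b : α) : Prop :=
  ∀ (i : Fin l) (x : Fin l → α), x i = b → φ x = 0

variable [AddCommMonoid B]

/-- The arity-`l` part of `m(e^b x_1 e^b ⋯ e^b x_n e^b)`, for an arbitrary map `φ` of `l`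
variables in place of `m_l`. -/
def insertionSum (φ : (Fin l → α) → B) (b : α) (x : Fin n → α) : B :=
  ∑ s : Finset (Fin l), if hs : s.card = n then φ (insertTuple b x s hs) else 0

theorem insertionSum_eq_zero_of_lt (φ : (Fin l → α) → B) (b : α) (x : Fin n → α) (h : l < n) :
    insertionSum φ b x = 0 :=
  Finset.sum_eq_zero fun s _ => dif_neg ((card_finset_fin_le s).trans_lt h).ne

theorem insertionSum_self (φ : (Fin n → α) → B) (b : α) (x : Fin n → α) :
    insertionSum φ b x = φ x := by
  rw [insertionSum, Finset.sum_eq_single Finset.univ, dif_pos (Finset.card_fin n),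
    insertTuple_univ]
  · exact fun s _ hs => dif_neg fun h => hs (s.card_eq_iff_eq_univ.mp (by simpa using h))
  · exact fun h => absurd (Finset.mem_univ _) h

theorem insertionSum_fin_zero (φ : (Fin l → α) → B) (b : α) (x : Fin 0 → α) :
    insertionSum φ b x = φ fun _ => b := by
  rw [insertionSum, Finset.sum_eq_single ∅, dif_pos Finset.card_empty, insertTuple_empty]
  · exact fun s _ hs => dif_neg (mt Finset.card_eq_zero.mp hs)
  · exact fun h => absurd (Finset.mem_univ _) h

theorem VanishesAt.insertionSum_eq_zero {φ : (Fin l → α) → B} {b : α} (hφ : VanishesAt φ b)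
    (x : Fin n → α) (h : n < l) : insertionSum φ b x = 0 := by
  refine Finset.sum_eq_zero fun s _ => ?_
  split_ifs with hs
  · obtain ⟨j, hj⟩ : ∃ j, j ∉ s := by
      by_contra! all_mem
      rw [Finset.eq_univ_iff_forall.mpr all_mem, Finset.card_fin] at hs
      exact h.ne' hs
    exact hφ j _ (insertTuple_of_notMem b x hs hj)
  · rfl

end Insertion

section Evaluation

variable {F : Type*} [Field F] {A : Type*} [AddCommGroup A] [Module F A]
  {𝒜 : ℤ → Submodule F A} {M : CurvedAinf F A 𝒜} {b : A} {n N : ℕ}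

theorem mDef_eq_finsum_insertionSum (M : CurvedAinf F A 𝒜) (b : A) (x : Fin n → A) :
    mDef M b x = ∑ᶠ l : ℕ, insertionSum (M.m l).toFun b x :=
  rfl

theorem mDef_eq_sum_range_s17 (hM : ∀ l, N ≤ l → VanishesAt (M.m l).toFun b) (hn : n < N)
    (x : Fin n → A) : mDef M b x = ∑ l ∈ Finset.range N, insertionSum (M.m l).toFun b x := by
  rw [mDef_eq_finsum_insertionSum]
  refine finsum_eq_sum_of_support_subset _ fun l hl => ?_
  by_contra hlN
  have hNl : N ≤ l := by simpa using hlN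
  exact hl ((hM l hNl).insertionSum_eq_zero x (hn.trans_le hNl))

theorem mDef_eq_apply (hM : ∀ l, n + 1 ≤ l → VanishesAt (M.m l).toFun b) (x : Fin n → A) :
    mDef M b x = (M.m n).toFun x := by
  rw [mDef_eq_sum_range_s17 hM n.lt_succ_self, Finset.sum_range_succ, insertionSum_self,
    Finset.sum_eq_zero fun l hl => insertionSum_eq_zero_of_lt _ _ _ (Finset.mem_range.mp hl),
    zero_add]

theorem mDef_fin_zero_eq_sum_range (hM : ∀ l, N ≤ l → VanishesAt (M.m l).toFun b) (hN : 0 < N)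
    (x : Fin 0 → A) : mDef M b x = ∑ l ∈ Finset.range N, (M.m l).toFun fun _ => b := by
  simp only [mDef_eq_sum_range_s17 hM hN, insertionSum_fin_zero]

/-- The partial unital property: every `m_k` with `k ≥ 3` vanishes when one of its inputs
is `c`. -/
def HasPartialUnitalProperty (M : CurvedAinf F A 𝒜) (c : A) : Prop :=
  ∀ k, 3 ≤ k → VanishesAt (M.m k).toFun c

/-- The center `Z(m_2)`, with the sign dictated by the degree of the other argument. -/
def mTwoCenter (M : CurvedAinf F A 𝒜) : Set A :=
  {c | ∀ (d : ℤ) (x : A), x ∈ 𝒜 d → (M.m 2).toFun ![c, x] = sgn F d • (M.m 2).toFun ![x, c]}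

/-- The obstruction equation for `b`, an arbitrary element of `A` of any degree. -/
def SolvesObstruction (M : CurvedAinf F A 𝒜) (b : A) : Prop :=
  ∀ (d : ℤ) (x : A), x ∈ 𝒜 d →
    mDef M b ![mDef M b (fun i : Fin 0 => i.elim0), x]
      = sgn F d • mDef M b ![x, mDef M b (fun i : Fin 0 => i.elim0)]

theorem HasPartialUnitalProperty.mDef_fin_zero (hb : HasPartialUnitalProperty M b)
    (x : Fin 0 → A) :
    mDef M b x = (M.m 0).toFun (fun i => i.elim0) + (M.m 1).toFun (fun _ => b)
      + (M.m 2).toFun ![b, b] := by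
  have empty_eq : (fun _ => b : Fin 0 → A) = fun i => i.elim0 := Subsingleton.elim _ _
  have pair_eq : (fun _ => b : Fin 2 → A) = ![b, b] := List.ofFn_inj.mp rfl
  rw [mDef_fin_zero_eq_sum_range hb (by decide), Finset.sum_range_succ, Finset.sum_range_succ,
    Finset.sum_range_one, empty_eq, pair_eq]

theorem HasPartialUnitalProperty.solvesObstruction_iff_mDef_mem_mTwoCenter
    (hb : HasPartialUnitalProperty M b) :
    SolvesObstruction M b ↔ mDef M b (fun i : Fin 0 => i.elim0) ∈ mTwoCenter M := by
  simp only [SolvesObstruction, mTwoCenter, Set.mem_ofPred_eq, mDef_eq_apply (n := 2) hb]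

end Evaluation

end Ainf

open Ainf in
theorem partial_unital_solves_obstruction_general {F : Type*} [Field F] {A : Type*}
    [AddCommGroup A] [Module F A] {𝒜 : ℤ → Submodule F A} {M : CurvedAinf F A 𝒜} {b : A}
    (hb : HasPartialUnitalProperty M b) :
    SolvesObstruction M b ↔
      (M.m 0).toFun (fun i => i.elim0) + (M.m 1).toFun (fun _ => b) + (M.m 2).toFun ![b, b]
        ∈ mTwoCenter M := by
  rw [hb.solvesObstruction_iff_mDef_mem_mTwoCenter, hb.mDef_fin_zero]

open Ainf in
/-- Let `(A, m)` be a curved A∞-algebra and let `b ∈ A^1` have the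
partial unital property (`m_k` vanishes whenever `b` is one of its inputs, for all
`k ≥ 3`) with `m_2(b, b) = 0` and `m_0(1) + m_1(b) ∈ Z(m_2)` (the center of `m_2`:
`m_2(c, x) = (-1)^{|x|} m_2(x, c)` for all homogeneous `x`).  Then `b` solves the
obstruction equation
`m(e^b m(e^b) e^b x e^b) = (-1)^{|x|} m(e^b x e^b m(e^b) e^b)` for all homogeneous
`x ∈ A`. -/
theorem partial_unital_solves_obstruction {F : Type*} [Field F] {A : Type*}
    [AddCommGroup A] [Module F A] (𝒜 : ℤ → Submodule F A)
    (M : CurvedAinf F A 𝒜) (b : A) (hb : b ∈ 𝒜 1)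
    (hpartial : ∀ (k : ℕ), 3 ≤ k → ∀ (i : Fin k) (x : Fin k → A), x i = b →
      (M.m k).toFun x = 0)
    (hbb : (M.m 2).toFun ![b, b] = 0)
    (hcen : ∀ (d : ℤ) (x : A), x ∈ 𝒜 d →
      (M.m 2).toFun ![(M.m 0).toFun (fun i => i.elim0) + (M.m 1).toFun (fun _ => b), x]
        = sgn F d •
          (M.m 2).toFun ![x, (M.m 0).toFun (fun i => i.elim0) + (M.m 1).toFun (fun _ => b)]) :
    ∀ (d : ℤ) (x : A), x ∈ 𝒜 d →
      mDef M b ![mDef M b (fun i : Fin 0 => i.elim0), x]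
        = sgn F d • mDef M b ![x, mDef M b (fun i : Fin 0 => i.elim0)] := by
  refine (partial_unital_solves_obstruction_general hpartial).mpr ?_
  rw [hbb, add_zero]
  exact hcen
end
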